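/- arXiv:1312.5067 — 7 statements merged into one kernel-verified Lean document; each statement's English description precedes it below -/
import Mathlib

section
/- Let G be an edge-colored graph and suppose that d^c(v) ≥ k for every vertex v of G. Then G contains a rainbow path of length at least ⌈3k/5⌉. -/
/-!
Let `p` be a rainbow path from `u` to `v` of length `l` with colors `L₀, …, L_{l-1}` and vertices
`p₀ = u, …, p_l = v`, and suppose that no rainbow path is longer by one.

* At least `k - l` colors at `u` do not occur on `p`. An edge carrying such a color must lead back
  to a vertex `p_{j+1}`, as it would prolong `p` otherwise. Let `S` be the set of these `j`;
  thus `|S| ≥ k - l`.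
* The edges from `v` to the `l` other vertices of `p` carry at most `l` colors, so at least `k - l`
  colors at `v` occur on edges leaving `p`, and each of these is some `L_j`, again because `p`
  cannot be prolonged. Let `T` be the set of these `j`; thus `|T| ≥ k - l`.
* `S` and `T` are disjoint: for `j ∈ S` the path `p_j, …, p₀, p_{j+1}, …, p_l` is rainbow and avoids
  the color `L_j` (`rotate_extend`), so an edge of color `L_j` leaving `p` at `v` would prolong it.

Hence `2 (k - l) ≤ l`, that is `2 k ≤ 3 l`. So rainbow paths can be prolonged as long as
`3 l < 2 k`, which is stronger than the bound `3 k / 5`.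
-/

open SimpleGraph

/-- The color degree of a vertex `v`: the number of distinct colors appearing on
edges incident to `v`. -/
noncomputable def colorDegree {V : Type*} (G : SimpleGraph V) (c : Sym2 V → ℕ) (v : V) : ℕ :=
  (c '' G.incidenceSet v).ncard

/-- A rainbow path: a path all of whose edges have pairwise distinct colors. -/
def IsRainbowPath {V : Type*} (G : SimpleGraph V) (c : Sym2 V → ℕ) {u v : V}
    (p : G.Walk u v) : Prop :=
  p.IsPath ∧ (p.edges.map c).Nodup

/-- Reversing the initial segment of `p` up to position `j` by means of the edge from `u` to
position `j + 1`, whose color `c s(u, p_{j+1})` is new, frees the `j`-th color of `p`, which can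
then be used at the other end. -/
lemma rotate_extend {V : Type*} (G : SimpleGraph V) (c : Sym2 V → ℕ) {u v w : V} (p : G.Walk u v)
    (hp : IsRainbowPath G c p) (j : ℕ) (hj : j < (p.edges.map c).length)
    (ha : G.Adj u (p.getVert (j + 1))) (hnew : c s(u, p.getVert (j + 1)) ∉ p.edges.map c)
    (hw : G.Adj v w) (hws : w ∉ p.support) (hcw : c s(v, w) = (p.edges.map c)[j]) :
    ∃ (x y : V) (q : G.Walk x y), IsRainbowPath G c q ∧ q.length = p.length + 1 := by
  have hjl : j < p.length := by simpa using hj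
  refine ⟨_, _, (((p.take j).reverse).append (Walk.cons ha (p.drop (j + 1)))).concat hw,
    ⟨?_, ?_⟩, ?_⟩
  · rw [Walk.isPath_def]
    have h1 : (p.support.take (j + 1) ++ p.support.drop (j + 1)).Nodup := by
      rw [List.take_append_drop]; exact hp.1.support_nodup
    have h2 : (((p.take j).reverse.append (Walk.cons ha (p.drop (j + 1)))).concat hw).support.Perm
        (w :: (p.support.take (j + 1) ++ p.support.drop (j + 1))) := by
      simp only [Walk.support_concat, Walk.support_append, Walk.support_reverse, Walk.support_cons,
        List.tail_cons, Walk.support_take, Walk.drop_support_eq_support_drop_min,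
        min_eq_left (Nat.succ_le_of_lt hjl)]
      refine List.perm_append_comm.trans (List.Perm.cons w ?_)
      exact (List.reverse_perm _).append_right _
    rw [h2.nodup_iff, List.nodup_cons]
    exact ⟨by rwa [List.take_append_drop], h1⟩
  · have h2 : ((((p.take j).reverse.append
        (Walk.cons ha (p.drop (j + 1)))).concat hw).edges.map c).Perm
        (c s(u, p.getVert (j + 1)) :: p.edges.map c) := by
      simp only [Walk.edges_concat, List.concat_eq_append, Walk.edges_append, Walk.edges_reverse,
        Walk.edges_cons, Walk.edges_take, Walk.edges_drop, List.map_append, List.map_reverse,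
        List.map_cons, List.map_nil, List.map_take, List.map_drop, hcw]
      conv_rhs => rw [← List.take_append_drop j (p.edges.map c), List.drop_eq_getElem_cons hj]
      rw [List.append_assoc, List.cons_append]
      refine List.perm_middle.trans (List.Perm.cons _ ?_)
      exact (List.reverse_perm _).append List.perm_append_comm
    rw [h2.nodup_iff]
    exact List.nodup_cons.2 ⟨hnew, hp.2⟩
  · simp [Walk.take_length, Walk.drop_length]; omega

/-- The double count behind the theorem: a rainbow path of length `l < 2 k / 3` implies a rainbow
path of length `l + 1`, though not necessarily one containing the given path. -/
lemma extend_rainbow {V : Type*} (G : SimpleGraph V) (c : Sym2 V → ℕ) (k : ℕ)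
    (hdeg : ∀ v : V, k ≤ colorDegree G c v) {u v : V} (p : G.Walk u v)
    (hp : IsRainbowPath G c p) (hl : 3 * p.length < 2 * k) :
    ∃ (x y : V) (q : G.Walk x y), IsRainbowPath G c q ∧ q.length = p.length + 1 := by
  classical
  by_contra hno
  have hlen : (p.edges.map c).length = p.length := by simp
  set L := p.edges.map c with hL
  have hstart : ∀ w, G.Adj u w → c s(u, w) ∉ L → w ∈ p.support := by
    intro w hw hc
    by_contra hws
    refine hno ⟨_, _, Walk.cons hw.symm p, ⟨?_, ?_⟩, by simp⟩
    · exact hp.1.cons hws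
    · simp only [Walk.edges_cons, List.map_cons, List.nodup_cons]
      exact ⟨by rwa [Sym2.eq_swap], hp.2⟩
  have hend : ∀ w, G.Adj v w → w ∉ p.support → c s(v, w) ∈ L := by
    intro w hw hws
    by_contra hc
    refine hno ⟨_, _, p.concat hw, ⟨hp.1.concat hws hw, ?_⟩, by simp⟩
    rw [Walk.edges_concat, List.concat_eq_append, List.map_append,
      (List.perm_append_comm).nodup_iff]
    exact List.nodup_cons.2 ⟨hc, hp.2⟩
  -- positions whose color is freed by rotating at `u`
  let S := (Finset.range p.length).filter fun j =>
    G.Adj u (p.getVert (j + 1)) ∧ c s(u, p.getVert (j + 1)) ∉ L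
  -- positions whose color occurs on an edge leaving `p` at `v`
  let T := (Finset.range p.length).filter fun j =>
    ∃ w, G.Adj v w ∧ w ∉ p.support ∧ c s(v, w) = L.getD j 0
  have hST : Disjoint S T := by
    rw [Finset.disjoint_left]
    intro j hjS hjT
    obtain ⟨hj, ha, hn⟩ := Finset.mem_filter.1 hjS
    obtain ⟨-, w, hw, hws, hcw⟩ := Finset.mem_filter.1 hjT
    have hj' : j < L.length := by rw [hlen]; simpa using hj
    rw [List.getD_eq_getElem _ _ hj'] at hcw
    exact hno (rotate_extend G c p hp j hj' ha hn hw hws hcw)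
  have hcard : S.card + T.card ≤ p.length := by
    rw [← Finset.card_union_of_disjoint hST]
    refine (Finset.card_le_card
      (Finset.union_subset (Finset.filter_subset _ _) (Finset.filter_subset _ _))).trans ?_
    simp
  have hS : k ≤ p.length + S.card := by
    have hsub : c '' G.incidenceSet u ⊆
        ((L.toFinset ∪ S.image fun j => c s(u, p.getVert (j + 1)) : Finset ℕ) : Set ℕ) := by
      rintro _ ⟨e, he, rfl⟩
      obtain ⟨w, rfl⟩ := he.2
      have hw : G.Adj u w := he.1
      rw [Finset.mem_coe, Finset.mem_union]
      by_cases hc : c s(u, w) ∈ L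
      · exact Or.inl (List.mem_toFinset.2 hc)
      right
      obtain ⟨n, hn, hnl⟩ := Walk.mem_support_iff_exists_getVert.1 (hstart w hw hc)
      obtain _ | n := n
      · rw [Walk.getVert_zero] at hn
        exact absurd hn hw.ne
      subst hn
      exact Finset.mem_image.2
        ⟨n, Finset.mem_filter.2 ⟨Finset.mem_range.2 (by omega), hw, hc⟩, rfl⟩
    have h1 := Set.ncard_le_ncard hsub (Finset.finite_toSet _)
    rw [Set.ncard_coe_finset] at h1
    have h2 := Finset.card_union_le L.toFinset (S.image fun j => c s(u, p.getVert (j + 1)))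
    have h3 := L.toFinset_card_le
    have h4 : (S.image fun j => c s(u, p.getVert (j + 1))).card ≤ S.card := Finset.card_image_le
    have h5 : k ≤ (c '' G.incidenceSet u).ncard := hdeg u
    omega
  have hT : k ≤ p.length + T.card := by
    have hsub : c '' G.incidenceSet v ⊆
        (((Finset.range p.length).image (fun j => c s(v, p.getVert j)) ∪
          T.image fun j => L.getD j 0 : Finset ℕ) : Set ℕ) := by
      rintro _ ⟨e, he, rfl⟩
      obtain ⟨w, rfl⟩ := he.2
      have hw : G.Adj v w := he.1
      rw [Finset.mem_coe, Finset.mem_union]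
      by_cases hws : w ∈ p.support
      · left
        obtain ⟨n, hn, hnl⟩ := Walk.mem_support_iff_exists_getVert.1 hws
        subst hn
        have hne : n ≠ p.length := by
          rintro rfl
          rw [Walk.getVert_length] at hw
          exact hw.ne rfl
        exact Finset.mem_image.2 ⟨n, Finset.mem_range.2 (by omega), rfl⟩
      · right
        obtain ⟨n, hn, hnc⟩ := List.mem_iff_getElem.1 (hend w hw hws)
        have hD : L.getD n 0 = c s(v, w) := by rw [List.getD_eq_getElem _ _ hn, hnc]
        exact Finset.mem_image.2
          ⟨n, Finset.mem_filter.2 ⟨Finset.mem_range.2 (by omega), w, hw, hws, hD.symm⟩, hD⟩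
    have h1 := Set.ncard_le_ncard hsub (Finset.finite_toSet _)
    rw [Set.ncard_coe_finset] at h1
    have h2 := Finset.card_union_le ((Finset.range p.length).image fun j => c s(v, p.getVert j))
      (T.image fun j => L.getD j 0)
    have h3 : ((Finset.range p.length).image fun j => c s(v, p.getVert j)).card ≤ p.length :=
      Finset.card_image_le.trans (by simp)
    have h4 : (T.image fun j => L.getD j 0).card ≤ T.card := Finset.card_image_le
    have h5 : k ≤ (c '' G.incidenceSet v).ncard := hdeg v
    omega
  omega

theorem exists_long_rainbow_path {V : Type*} [Fintype V] [Nonempty V]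
    (G : SimpleGraph V) (c : Sym2 V → ℕ) (k : ℕ)
    (hdeg : ∀ v : V, k ≤ colorDegree G c v) :
    ∃ (u v : V) (p : G.Walk u v), IsRainbowPath G c p ∧
      ⌈(3 * (k : ℚ)) / 5⌉₊ ≤ p.length := by
  have key : ∀ n : ℕ, 3 * n < 2 * k + 3 →
      ∃ (u v : V) (p : G.Walk u v), IsRainbowPath G c p ∧ p.length = n := by
    intro n
    induction n with
    | zero =>
      intro _
      obtain ⟨u⟩ := ‹Nonempty V›
      exact ⟨u, u, Walk.nil, ⟨by simp, by simp⟩, rfl⟩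
    | succ n ih =>
      intro hn
      obtain ⟨u, v, p, hp, rfl⟩ := ih (by omega)
      exact extend_rainbow G c k hdeg p hp (by omega)
  obtain ⟨u, v, p, hp, hl⟩ := key ((2 * k + 2) / 3) (by omega)
  refine ⟨u, v, p, hp, Nat.ceil_le.2 ?_⟩
  have h : 3 * k ≤ 5 * p.length := by omega
  have h' : (3 * k : ℚ) ≤ 5 * p.length := by exact_mod_cast h
  linarith
end

section
/- Let G be an edge-colored graph with d^c(v) ≥ k for every vertex v, and let P = u_0 u_1 … u_t be a rainbow path of maximum length t among all rainbow paths in G, with x = u_0. Let U be the set of colors of the edges of P. Then the number of indices i with 1 ≤ i ≤ t such that (x, u_i) is an edge of G whose color does not belong to U is at least k − t. -/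
/-!
Every color at `x` is either a color of `p` (at most `t` of these) or the color of an edge `x w`
whose color is new. In the latter case `w` lies on `p`, since otherwise prepending `w` to `p`
would give a rainbow path of length `t + 1`; so `w = p.getVert i` for a counted index `i`.
Hence the color degree of `x` is at most `t` plus the number of counted indices.
-/

open SimpleGraph

theorem many_new_colored_edges_from_endpoint {V : Type*} [Fintype V]
    (G : SimpleGraph V) (c : Sym2 V → ℕ) (k t : ℕ)
    (hdeg : ∀ v : V, k ≤ colorDegree G c v)
    {x y : V} (p : G.Walk x y) (hp : IsRainbowPath G c p) (hlen : p.length = t)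
    (hmax : ∀ (a b : V) (q : G.Walk a b), IsRainbowPath G c q → q.length ≤ t) :
    (k : ℤ) - (t : ℤ) ≤
      (({i : ℕ | 1 ≤ i ∧ i ≤ t ∧ G.Adj x (p.getVert i) ∧
          c s(x, p.getVert i) ∉ p.edges.map c}).ncard : ℤ) := by
  classical
  set S : Set ℕ := {i : ℕ | 1 ≤ i ∧ i ≤ t ∧ G.Adj x (p.getVert i) ∧
    c s(x, p.getVert i) ∉ p.edges.map c} with hS
  have hSfin : S.Finite := (Set.finite_Iic t).subset fun i hi => hi.2.1
  have hsub : c '' G.incidenceSet x ⊆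
      ↑(p.edges.map c).toFinset ∪ (fun i => c s(x, p.getVert i)) '' S := by
    rintro _ ⟨e, he, rfl⟩
    obtain ⟨w, rfl⟩ := Sym2.mem_iff_exists.mp he.2
    have hadj : G.Adj x w := he.1
    by_cases hU : c s(x, w) ∈ p.edges.map c
    · exact Or.inl (by simpa using hU)
    right
    -- A neighbor off `p` reached by a new color would give a longer rainbow path.
    have hw : w ∈ p.support := by
      by_contra hw
      have hlong := hmax w y (Walk.cons hadj.symm p)
        ⟨hp.1.cons hw, by
          rw [Walk.edges_cons, List.map_cons, List.nodup_cons, Sym2.eq_swap]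
          exact ⟨hU, hp.2⟩⟩
      rw [Walk.length_cons] at hlong
      omega
    obtain ⟨i, rfl, hi⟩ := Walk.mem_support_iff_exists_getVert.mp hw
    refine ⟨i, ⟨?_, hlen ▸ hi, hadj, hU⟩, rfl⟩
    rcases Nat.eq_zero_or_pos i with rfl | h
    · exact absurd hadj (by simp)
    · exact h
  have hcolors : (c '' G.incidenceSet x).ncard ≤ t + S.ncard := by
    refine (Set.ncard_le_ncard hsub ((Finset.finite_toSet _).union (hSfin.image _))).trans
      ((Set.ncard_union_le _ _).trans (add_le_add ?_ (Set.ncard_image_le hSfin)))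
    rw [Set.ncard_coe_finset]
    refine (List.toFinset_card_le _).trans ?_
    rw [List.length_map, Walk.length_edges, hlen]
  have hk : k ≤ t + S.ncard := (hdeg x).trans hcolors
  omega
end

section
/- Let G be an edge-colored graph, let P = u_0 u_1 … u_t be a rainbow path of maximum length t among all rainbow paths in G, with x = u_0 and y = u_t, and suppose G contains no rainbow cycle of length t+1. If u_i ∈ M_x ∩ T_y, then color(y, u_i) = color(x, u_{i+1}). -/
/-!
If the colors of `y u_i` and `x u_{i+1}` differed, the closed walk
`x u_{i+1} ⋯ y u_i ⋯ x` obtained from the path by replacing the edge `u_i u_{i+1}` with these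
two edges would be a rainbow cycle: neither new color occurs on the path, and the vertices are
those of the path. Its length is `t + 1`, which is excluded (`exists_rainbowCycle`).
-/

open SimpleGraph

/-- A rainbow cycle: a cycle all of whose edges have pairwise distinct colors. -/
def IsRainbowCycle {V : Type*} (G : SimpleGraph V) (c : Sym2 V → ℕ) {u : V}
    (p : G.Walk u u) : Prop :=
  p.IsCycle ∧ (p.edges.map c).Nodup

/-- `Tx`: the set of indices `i` with `2 ≤ i ≤ t-1` such that `(x, u_i)` is an edge whose
color does not appear on `P` (i.e. lies in `Uᶜ`), where `P = u_0 u_1 … u_t` with `x = u_0`. -/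
def Tx {V : Type*} (G : SimpleGraph V) (c : Sym2 V → ℕ) {x y : V} (p : G.Walk x y) : Set ℕ :=
  {i : ℕ | 2 ≤ i ∧ i ≤ p.length - 1 ∧ G.Adj x (p.getVert i) ∧
    c s(x, p.getVert i) ∉ p.edges.map c}

/-- `Ty`: the set of indices `i` with `1 ≤ i ≤ t-2` such that `(y, u_i)` is an edge whose
color does not appear on `P` (i.e. lies in `Uᶜ`), where `P = u_0 u_1 … u_t` with `y = u_t`. -/
def Ty {V : Type*} (G : SimpleGraph V) (c : Sym2 V → ℕ) {x y : V} (p : G.Walk x y) : Set ℕ :=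
  {i : ℕ | 1 ≤ i ∧ i ≤ p.length - 2 ∧ G.Adj y (p.getVert i) ∧
    c s(y, p.getVert i) ∉ p.edges.map c}

/-- `Mx`: the set of indices `j` such that `j + 1 ∈ Tx`. -/
def Mx {V : Type*} (G : SimpleGraph V) (c : Sym2 V → ℕ) {x y : V} (p : G.Walk x y) : Set ℕ :=
  {j : ℕ | j + 1 ∈ Tx G c p}

/-- A walk of length more than `i` splits as a walk to its `i`-th vertex, one edge, and a walk
from its `(i + 1)`-st vertex. -/
lemma exists_eq_append_cons_getVert {V : Type*} {G : SimpleGraph V} {x y : V} (p : G.Walk x y)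
    (i : ℕ) (hi : i < p.length) :
    ∃ (A : G.Walk x (p.getVert i)) (h : G.Adj (p.getVert i) (p.getVert (i + 1)))
      (B : G.Walk (p.getVert (i + 1)) y), p = A.append (Walk.cons h B) := by
  induction p generalizing i with
  | nil => simp at hi
  | @cons u v w h p ih =>
    cases i with
    | zero =>
      rw [show (Walk.cons h p).getVert (0 + 1) = v by simp]
      exact ⟨Walk.nil, h, p, rfl⟩
    | succ i =>
      obtain ⟨A, e, B, hAB⟩ := ih i (by simpa using hi)
      exact ⟨Walk.cons h A, e, B, congrArg (Walk.cons h) hAB⟩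

/-- Rerouting a rainbow path `x ⋯ a b ⋯ y` along two new edges `xb` and `ya` of distinct
colors, both absent from the path, gives a rainbow cycle with one edge more than the path. -/
lemma exists_rainbowCycle {V : Type*} {G : SimpleGraph V} {c : Sym2 V → ℕ} {x a b y : V}
    (A : G.Walk x a) (h : G.Adj a b) (B : G.Walk b y)
    (hp : IsRainbowPath G c (A.append (Walk.cons h B)))
    (hxb : G.Adj x b) (hya : G.Adj y a)
    (hcx : c s(x, b) ∉ (A.append (Walk.cons h B)).edges.map c)
    (hcy : c s(y, a) ∉ (A.append (Walk.cons h B)).edges.map c)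
    (hne : c s(y, a) ≠ c s(x, b)) :
    ∃ q : G.Walk x x, IsRainbowCycle G c q ∧ q.length = (A.append (Walk.cons h B)).length + 1 := by
  obtain ⟨hpath, hcol⟩ := hp
  have hcolors : ((Walk.cons hxb (B.append (Walk.cons hya A.reverse))).edges.map c).Nodup := by
    simp only [Walk.edges_append, Walk.edges_cons, Walk.edges_reverse, List.map_append,
      List.map_cons, List.map_reverse] at hcol hcx hcy ⊢
    grind [List.nodup_append, List.nodup_reverse]
  refine ⟨Walk.cons hxb (B.append (Walk.cons hya A.reverse)), ⟨?_, hcolors⟩, ?_⟩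
  · rw [Walk.cons_isCycle_iff]
    constructor
    · rw [Walk.isPath_def, Walk.support_append] at hpath ⊢
      simp only [Walk.support_cons, List.tail_cons, Walk.support_reverse] at hpath ⊢
      grind [List.nodup_append, List.nodup_reverse]
    · have hnodup := hcolors.of_map
      rw [Walk.edges_cons, List.nodup_cons] at hnodup
      exact hnodup.1
  · simp only [Walk.length_cons, Walk.length_append, Walk.length_reverse]
    omega

theorem color_eq_of_mem_Mx_inter_Ty {V : Type*} [Fintype V]
    (G : SimpleGraph V) (c : Sym2 V → ℕ)
    {x y : V} (p : G.Walk x y) (hp : IsRainbowPath G c p)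
    (hmax : ∀ (a b : V) (q : G.Walk a b), IsRainbowPath G c q → q.length ≤ p.length)
    (hnocyc : ∀ (u : V) (q : G.Walk u u), IsRainbowCycle G c q → q.length ≠ p.length + 1)
    (i : ℕ) (hi : i ∈ Mx G c p ∩ Ty G c p) :
    c s(y, p.getVert i) = c s(x, p.getVert (i + 1)) := by
  obtain ⟨⟨-, hit, hxb, hcx⟩, -, -, hya, hcy⟩ := hi
  by_contra hne
  obtain ⟨A, h, B, hAB⟩ := exists_eq_append_cons_getVert p i (by omega)
  have hlen := congrArg Walk.length hAB
  have hedges := congrArg Walk.edges hAB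
  have hsupp := congrArg Walk.support hAB
  obtain ⟨q, hq, hqlen⟩ := exists_rainbowCycle (c := c) A h B
    (by rw [IsRainbowPath, Walk.isPath_def, ← hsupp, ← hedges, ← Walk.isPath_def]; exact hp)
    hxb hya (by rwa [← hedges]) (by rwa [← hedges]) hne
  exact hnocyc x q hq (by rw [hqlen, ← hlen])
end

section
/- Let G be an edge-colored graph, let P = u_0 u_1 … u_t be a rainbow path of maximum length t among all rainbow paths in G, with x = u_0 and y = u_t, and suppose G contains no rainbow cycle of length t+1. Let u_i ∈ M_x ∩ T_y and suppose w is a vertex of G such that (y, w) is an edge of G with color(y, w) = color(u_i, u_{i+1}). Then w lies on the path P. -/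
/-!
Suppose `w` is not on `P = u_0 … u_t`. Removing the edge `u_i u_{i+1}` from `P` and adding the edges
`x u_{i+1}` and `y w` yields the path `w, y = u_t, …, u_{i+1}, x = u_0, u_1, …, u_i` of length
`t + 1`. The color of the removed edge is taken over by `y w`, and the color of `x u_{i+1}` does not
occur on `P` because `u_i ∈ M_x`, so the new path is rainbow, contradicting the maximality of `t`.

`exists_split_at_edge` cuts `P` at the edge `u_i u_{i+1}`, and `isRainbowPath_reroute` shows that
the rerouted path is rainbow.
-/

open SimpleGraph

/-- A walk can be cut at its `i`-th edge. -/
lemma exists_split_at_edge {V : Type*} {G : SimpleGraph V} {x y : V} (p : G.Walk x y) (i : ℕ)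
    (hi : i < p.length) :
    ∃ (a : G.Walk x (p.getVert i)) (h : G.Adj (p.getVert i) (p.getVert (i + 1)))
      (b : G.Walk (p.getVert (i + 1)) y), p = a.append (Walk.cons h b) := by
  induction p generalizing i with
  | nil => simp at hi
  | @cons u v w h p ih =>
    cases i with
    | zero =>
      -- `p.getVert 0` reduces to the start of `p` only once `p` is a constructor.
      cases p with
      | nil => exact ⟨Walk.nil, h, Walk.nil, rfl⟩
      | cons h' q => exact ⟨Walk.nil, h, Walk.cons h' q, rfl⟩
    | succ i =>
      obtain ⟨a, h', b, e⟩ := ih i (by simpa using hi)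
      exact ⟨Walk.cons h a, h', b, congrArg (Walk.cons h) e⟩

/-- If `x … u v … y` is a rainbow path, `w` lies outside it, `y w` has the color of `u v`, and the
color of `v x` does not occur on the path, then `w y … v x … u` is a rainbow path. -/
lemma isRainbowPath_reroute {V : Type*} {G : SimpleGraph V} {c : Sym2 V → ℕ} {x y u v w : V}
    (a : G.Walk x u) (h : G.Adj u v) (b : G.Walk v y)
    (hp : IsRainbowPath G c (a.append (Walk.cons h b)))
    (hvx : G.Adj v x) (hnew : c s(v, x) ∉ (a.append (Walk.cons h b)).edges.map c)
    (hwy : G.Adj w y) (hcol : c s(w, y) = c s(u, v))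
    (hw : w ∉ (a.append (Walk.cons h b)).support) :
    IsRainbowPath G c (Walk.cons hwy (b.reverse.append (Walk.cons hvx a))) := by
  obtain ⟨hpath, hcolors⟩ := hp
  rw [Walk.isPath_def] at hpath
  refine ⟨?_, ?_⟩
  · rw [Walk.isPath_def]
    -- The new vertex list is a permutation of the old one with `w` added.
    have hperm : (Walk.cons hwy (b.reverse.append (Walk.cons hvx a))).support.Perm
        (w :: (a.append (Walk.cons h b)).support) := by
      simp only [Walk.support_cons, Walk.support_append, Walk.support_reverse, List.tail_cons]
      exact (((List.reverse_perm _).append_right _).trans List.perm_append_comm).cons _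
    exact hperm.nodup_iff.mpr (List.nodup_cons.mpr ⟨hw, hpath⟩)
  · -- The new color list is a permutation of the old one with the color of `v x` added.
    have hperm : ((Walk.cons hwy (b.reverse.append (Walk.cons hvx a))).edges.map c).Perm
        (c s(v, x) :: (a.append (Walk.cons h b)).edges.map c) := by
      simp only [Walk.edges_cons, Walk.edges_append, Walk.edges_reverse, List.map_cons,
        List.map_append, List.map_reverse, hcol]
      rw [← Multiset.coe_eq_coe]
      simp only [← Multiset.cons_coe, ← Multiset.coe_add, Multiset.coe_reverse,
        ← Multiset.singleton_add]
      abel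
    exact hperm.nodup_iff.mpr (List.nodup_cons.mpr ⟨hnew, hcolors⟩)

theorem same_colored_edge_at_y_lands_on_path {V : Type*} [Fintype V]
    (G : SimpleGraph V) (c : Sym2 V → ℕ)
    {x y : V} (p : G.Walk x y) (hp : IsRainbowPath G c p)
    (hmax : ∀ (a b : V) (q : G.Walk a b), IsRainbowPath G c q → q.length ≤ p.length)
    (hnocyc : ∀ (u : V) (q : G.Walk u u), IsRainbowCycle G c q → q.length ≠ p.length + 1)
    (i : ℕ) (hi : i ∈ Mx G c p ∩ Ty G c p)
    (w : V) (hadj : G.Adj y w)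
    (hcol : c s(y, w) = c s(p.getVert i, p.getVert (i + 1))) :
    w ∈ p.support := by
  obtain ⟨⟨hi2, hilt, hadjx, hnew⟩, -⟩ := hi
  by_contra hw
  obtain ⟨a, h, b, e⟩ := exists_split_at_edge p i (by lia)
  have hq : IsRainbowPath G c
      (Walk.cons hadj.symm (b.reverse.append (Walk.cons hadjx.symm a))) := by
    refine isRainbowPath_reroute a h b (e ▸ hp) hadjx.symm ?_ hadj.symm ?_ (e ▸ hw)
    · rw [← e, Sym2.eq_swap]
      exact hnew
    · rw [Sym2.eq_swap]
      exact hcol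
  have hle := hmax _ _ _ hq
  have hlen := congrArg Walk.length e
  simp only [Walk.length_cons, Walk.length_append, Walk.length_reverse] at hle hlen
  lia
end

section
/- Let G be an edge-colored graph, let P = u_0 u_1 … u_t be a rainbow path of maximum length t among all rainbow paths in G, with x = u_0 and y = u_t, and suppose G contains no rainbow cycle of length t+1. Let A_1 be the set of vertices u_i ∈ M_x ∩ T_y for which there exists a vertex w(u_i) ∈ M_x such that (y, w(u_i)) is an edge of G with color(y, w(u_i)) = color(u_i, u_{i+1}). Then 2·|A_1| ≤ |M_x|. -/
/-!
Write `A₁` for the set on the left. Each `u_i` with `i ∈ A₁` lies in `M_x`, and so does a chosen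
witness `w(u_i)`. The map `i ↦ w(u_i)` is injective on `A₁`, because `w(u_i)` determines the color
of the path edge `u_i u_{i+1}` and `P` is rainbow. The vertices of `A₁` and the witnesses form
disjoint sets: for `u_i ∈ T_y` the color of `(y, u_i)` is not on `P`, whereas the color of
`(y, w(u_j))` is that of a path edge. Hence `M_x` contains two disjoint copies of `A₁`.
-/

open SimpleGraph

/-- On a rainbow path, the color of the edge `u_i u_{i+1}` determines `i`. -/
lemma color_step_inj {V : Type*} {G : SimpleGraph V} {c : Sym2 V → ℕ} {x y : V} {p : G.Walk x y}
    (hp : IsRainbowPath G c p) {i j : ℕ} (hi : i < p.length) (hj : j < p.length)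
    (h : c s(p.getVert i, p.getVert (i + 1)) = c s(p.getVert j, p.getVert (j + 1))) : i = j := by
  have hi' : i < (p.edges.map c).length := by simpa using hi
  have hj' : j < (p.edges.map c).length := by simpa using hj
  refine (hp.2.getElem_inj_iff (hi := hi') (hj := hj')).1 ?_
  simpa [Walk.getElem_edges] using h

lemma color_step_mem {V : Type*} {G : SimpleGraph V} (c : Sym2 V → ℕ) {x y : V} (p : G.Walk x y)
    {i : ℕ} (hi : i < p.length) :
    c s(p.getVert i, p.getVert (i + 1)) ∈ p.edges.map c := by
  have hi' : i < p.edges.length := by simpa using hi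
  refine List.mem_map_of_mem ?_
  rw [← Walk.getElem_edges (h := hi')]
  exact List.getElem_mem _

theorem two_mul_card_A1_le_card_Mx {V : Type*} [Fintype V]
    (G : SimpleGraph V) (c : Sym2 V → ℕ)
    {x y : V} (p : G.Walk x y) (hp : IsRainbowPath G c p)
    (hmax : ∀ (a b : V) (q : G.Walk a b), IsRainbowPath G c q → q.length ≤ p.length)
    (hnocyc : ∀ (u : V) (q : G.Walk u u), IsRainbowCycle G c q → q.length ≠ p.length + 1) :
    2 * ({i : ℕ | i ∈ Mx G c p ∩ Ty G c p ∧
            ∃ w ∈ p.getVert '' Mx G c p, G.Adj y w ∧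
              c s(y, w) = c s(p.getVert i, p.getVert (i + 1))}).ncard ≤
      (p.getVert '' Mx G c p).ncard := by
  set A : Set ℕ := {i : ℕ | i ∈ Mx G c p ∩ Ty G c p ∧
    ∃ w ∈ p.getVert '' Mx G c p, G.Adj y w ∧
      c s(y, w) = c s(p.getVert i, p.getVert (i + 1))}
  have hlt : ∀ i ∈ A, i < p.length := by
    rintro i ⟨⟨-, h1, h2, -⟩, -⟩
    omega
  have hw : ∀ i, ∃ w, i ∈ A → w ∈ p.getVert '' Mx G c p ∧
      c s(y, w) = c s(p.getVert i, p.getVert (i + 1)) := by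
    intro i
    by_cases hi : i ∈ A
    · obtain ⟨-, w, hwM, -, hwc⟩ := hi
      exact ⟨w, fun _ => ⟨hwM, hwc⟩⟩
    · exact ⟨x, fun h => absurd h hi⟩
  choose w hw using hw
  have hinjw : Set.InjOn w A := by
    intro i hi j hj hij
    refine color_step_inj hp (hlt i hi) (hlt j hj) ?_
    rw [← (hw i hi).2, ← (hw j hj).2, hij]
  have hinju : Set.InjOn p.getVert A :=
    hp.1.getVert_injOn.mono fun i hi => (hlt i hi).le
  have hdisj : Disjoint (p.getVert '' A) (w '' A) := by
    rw [Set.disjoint_left]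
    rintro _ ⟨i, hi, rfl⟩ ⟨j, hj, hji⟩
    apply hi.1.2.2.2.2
    rw [← hji, (hw j hj).2]
    exact color_step_mem c p (hlt j hj)
  have hsub : p.getVert '' A ∪ w '' A ⊆ p.getVert '' Mx G c p := by
    rintro _ (⟨i, hi, rfl⟩ | ⟨i, hi, rfl⟩)
    · exact ⟨i, hi.1.1, rfl⟩
    · exact (hw i hi).1
  have hcard := Set.ncard_le_ncard hsub (Set.toFinite _)
  rw [Set.ncard_union_eq hdisj (Set.toFinite _) (Set.toFinite _),
    hinju.ncard_image, hinjw.ncard_image] at hcard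
  omega
end

section
/- Let G be an edge-colored graph with d^c(v) ≥ k for every vertex v, let P = u_0 u_1 … u_t be a rainbow path of maximum length t among all rainbow paths in G, with x = u_0 and y = u_t, and suppose G contains no rainbow cycle of length t+1. Let B be the set of vertices u_i ∈ M_x ∩ T_y such that the color color(u_i, u_{i+1}) does not appear on any edge incident to y. Then |T_y| ≥ k − t + |B|. -/
/-!
The colors at the endpoint `y` are counted. A color at `y` that does not occur on the path `p`
lies on an edge from `y` to an interior vertex `u_i` of `p` with `i ∈ Ty`: an edge leaving the path
would extend it to a longer rainbow path, and an edge to `x` would close it to a rainbow cycle of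
length `p.length + 1`. Hence there are at most `|Ty|` such colors. A color at `y` that does occur on
`p` is one of the `p.length` colors of `p`, and it differs from the colors of `u_i u_{i+1}` for
`i ∈ B`, which are pairwise distinct because `p` is rainbow. Hence there are at most
`p.length - |B|` of these, and adding both bounds gives the claim.
-/


open SimpleGraph

lemma mk_getVert_mem_edges {V : Type*} {G : SimpleGraph V} {x y : V} (p : G.Walk x y) {i : ℕ}
    (hi : i < p.length) : s(p.getVert i, p.getVert (i + 1)) ∈ p.edges := by
  rw [← Walk.getElem_edges (by simpa using hi)]
  exact List.getElem_mem _

/-- The other end of an edge at `y` with a color missing from `p` is `u_i` for some `i ∈ Ty`. -/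
lemma exists_mem_Ty_of_color_notMem {V : Type*} (G : SimpleGraph V) (c : Sym2 V → ℕ)
    {x y : V} (p : G.Walk x y) (hp : IsRainbowPath G c p)
    (hmax : ∀ (a b : V) (q : G.Walk a b), IsRainbowPath G c q → q.length ≤ p.length)
    (hnocyc : ∀ (u : V) (q : G.Walk u u), IsRainbowCycle G c q → q.length ≠ p.length + 1)
    {w : V} (hw : G.Adj y w) (hc : c s(y, w) ∉ p.edges.map c) :
    ∃ i ∈ Ty G c p, p.getVert i = w := by
  have hsupp : w ∈ p.support := by
    by_contra hns
    have h := hmax _ _ (p.concat hw) ⟨hp.1.concat hns hw, by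
      rw [Walk.edges_concat, List.concat_eq_append, List.map_append, List.nodup_append]
      refine ⟨hp.2, by simp, ?_⟩
      rintro a ha b hb rfl
      simp only [List.map_cons, List.map_nil, List.mem_singleton] at hb
      exact hc (hb ▸ ha)⟩
    rw [Walk.length_concat] at h
    omega
  obtain ⟨i, rfl, hi⟩ := Walk.mem_support_iff_exists_getVert.1 hsupp
  have hne : i ≠ p.length := by
    rintro rfl
    simp at hw
  have hne1 : i + 1 ≠ p.length := by
    intro h
    apply hc
    have hmem : s(p.getVert i, p.getVert (i + 1)) ∈ p.edges :=
      mk_getVert_mem_edges p (by omega)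
    rw [h, Walk.getVert_length, Sym2.eq_swap] at hmem
    exact List.mem_map_of_mem hmem
  have hne0 : i ≠ 0 := by
    rintro rfl
    rw [Walk.getVert_zero] at hw hc
    refine hnocyc y (Walk.cons hw p) ⟨?_, ?_⟩ (by simp)
    · rw [Walk.cons_isCycle_iff]
      exact ⟨hp.1, fun h => hc (List.mem_map_of_mem h)⟩
    · rw [Walk.edges_cons, List.map_cons, List.nodup_cons]
      exact ⟨hc, hp.2⟩
  exact ⟨i, ⟨by omega, by omega, hw, hc⟩, rfl⟩

theorem card_Ty_ge_of_B {V : Type*} [Fintype V]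
    (G : SimpleGraph V) (c : Sym2 V → ℕ) (k : ℕ)
    (hdeg : ∀ v : V, k ≤ colorDegree G c v)
    {x y : V} (p : G.Walk x y) (hp : IsRainbowPath G c p)
    (hmax : ∀ (a b : V) (q : G.Walk a b), IsRainbowPath G c q → q.length ≤ p.length)
    (hnocyc : ∀ (u : V) (q : G.Walk u u), IsRainbowCycle G c q → q.length ≠ p.length + 1) :
    (k : ℤ) - (p.length : ℤ) +
        (({i : ℕ | i ∈ Mx G c p ∩ Ty G c p ∧
            ∀ e ∈ G.incidenceSet y, c e ≠ c s(p.getVert i, p.getVert (i + 1))}).ncard : ℤ) ≤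
      ((Ty G c p).ncard : ℤ) := by
  set B : Set ℕ := {i : ℕ | i ∈ Mx G c p ∩ Ty G c p ∧
    ∀ e ∈ G.incidenceSet y, c e ≠ c s(p.getVert i, p.getVert (i + 1))} with hB
  set f : ℕ → ℕ := fun i => c s(p.getVert i, p.getVert (i + 1)) with hf
  set U : Set ℕ := {a | a ∈ p.edges.map c} with hU
  have hTfin : (Ty G c p).Finite :=
    (Set.finite_Iic (p.length - 2)).subset fun i hi => hi.2.1
  have hUfin : U.Finite := List.finite_toSet _
  have hUcard : U.ncard = p.length := by
    have h : U = ((p.edges.map c).toFinset : Set ℕ) := by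
      ext a
      simp [hU]
    rw [h, Set.ncard_coe_finset, List.toFinset_card_of_nodup hp.2]
    simp
  have hBlt : ∀ i ∈ B, i < p.length := by
    intro i hi
    have h1 := hi.1.2.1
    have h2 := hi.1.2.2.1
    omega
  have hBU : f '' B ⊆ U := by
    rintro _ ⟨i, hi, rfl⟩
    exact List.mem_map_of_mem (mk_getVert_mem_edges p (hBlt i hi))
  have hinj : Set.InjOn f B := by
    intro i hi j hj hij
    have hi' := hBlt i hi
    have hj' := hBlt j hj
    have key : ∀ n (hn : n < (p.edges.map c).length), (p.edges.map c)[n] = f n := by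
      intro n hn
      simp [hf, Walk.getElem_edges]
    refine (hp.2.getElem_inj_iff (hi := by simpa using hi') (hj := by simpa using hj')).1 ?_
    rw [key, key, hij]
  have hsub : c '' G.incidenceSet y ⊆
      (U \ f '' B) ∪ (fun i => c s(y, p.getVert i)) '' Ty G c p := by
    rintro _ ⟨e, he, rfl⟩
    by_cases hcU : c e ∈ U
    · left
      refine ⟨hcU, ?_⟩
      rintro ⟨i, hi, hie⟩
      exact hi.2 e he hie.symm
    · right
      obtain ⟨w, rfl⟩ := Sym2.mem_iff_exists.1 he.2
      obtain ⟨i, hi, rfl⟩ := exists_mem_Ty_of_color_notMem G c p hp hmax hnocyc he.1 hcU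
      exact ⟨i, hi, rfl⟩
  have h1 : k ≤ (U \ f '' B).ncard + (Ty G c p).ncard :=
    calc k ≤ (c '' G.incidenceSet y).ncard := hdeg y
      _ ≤ _ := Set.ncard_le_ncard hsub (hUfin.sdiff.union (hTfin.image _))
      _ ≤ _ := Set.ncard_union_le _ _
      _ ≤ _ := Nat.add_le_add_left (Set.ncard_image_le hTfin) _
  have h2 := Set.ncard_sdiff_add_ncard_of_subset hBU hUfin
  rw [hinj.ncard_image, hUcard] at h2
  omega
end

section
/- Let G be an edge-colored graph, let t be the maximum length of a rainbow path in G, and let CL = u_0 u_1 … u_t u_0 be a rainbow cycle of length t+1 in G. Then every edge of G joining a vertex of CL to a vertex not on CL has a color that appears on some edge of CL. -/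
/-!
If an edge `ab` leaving the cycle at `a` had a color absent from the cycle, then deleting a cycle
edge at `a` would leave a rainbow path of length `t` ending at `a`, and appending `ab` would extend
it to a rainbow path of length `t + 1`, contradicting the maximality of `t`.
-/

open SimpleGraph

theorem edge_leaving_cycle_has_cycle_color {V : Type*} [Fintype V]
    (G : SimpleGraph V) (c : Sym2 V → ℕ) (t : ℕ)
    (hex : ∃ (a b : V) (p : G.Walk a b), IsRainbowPath G c p ∧ p.length = t)
    (hmax : ∀ (a b : V) (p : G.Walk a b), IsRainbowPath G c p → p.length ≤ t)
    {u : V} (cyc : G.Walk u u) (hcyc : IsRainbowCycle G c cyc)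
    (hclen : cyc.length = t + 1) :
    ∀ a b : V, a ∈ cyc.support → b ∉ cyc.support → G.Adj a b →
      c s(a, b) ∈ cyc.edges.map c := by
  classical
  intro a b ha hb hab
  by_contra hcol
  -- Restart the cycle at `a`, so that deleting its first edge leaves a path ending at `a`.
  obtain ⟨d, hd⟩ : ∃ d, d = cyc.rotate a ha := ⟨_, rfl⟩
  have hdc : d.IsCycle := by rw [hd]; exact (Walk.isCycle_rotate ha).2 hcyc.1
  have hperm : (d.edges.map c).Perm (cyc.edges.map c) := by
    rw [hd]; exact (cyc.rotate_edges a ha).perm.map c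
  have hdnodup : (d.edges.map c).Nodup := hperm.nodup_iff.2 hcyc.2
  have hdlen : d.length = t + 1 := by rw [hd, Walk.length_rotate, hclen]
  have hdb : b ∉ d.support := by rwa [hd, Walk.mem_support_rotate_iff]
  have hdcol : c s(a, b) ∉ d.edges.map c := fun h => hcol (hperm.mem_iff.1 h)
  clear hd
  cases d with
  | nil => simp at hdlen
  | cons h q =>
    have hq : q.IsPath := by simpa using hdc.isPath_tail
    rw [Walk.edges_cons, List.map_cons] at hdnodup hdcol
    rw [Walk.support_cons] at hdb
    have hrainbow : IsRainbowPath G c (q.concat hab) := by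
      refine ⟨hq.concat (fun hbq => hdb (List.mem_cons_of_mem _ hbq)) hab, ?_⟩
      rw [Walk.edges_concat, List.map_concat, List.nodup_concat]
      exact ⟨fun hm => hdcol (List.mem_cons_of_mem _ hm), hdnodup.of_cons⟩
    have hle := hmax _ _ _ hrainbow
    rw [Walk.length_concat] at hle
    rw [Walk.length_cons] at hdlen
    omega
end
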